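/- Let ℤ² denote the square lattice (vertex set ℤ × ℤ, with (a,b) adjacent to (c,d) if and only if |a − c| + |b − d| = 1), and let 𝕋 denote the triangular lattice (vertex set ℤ × ℤ, with (a,b) adjacent to (c,d) if and only if (c − a, d − b) ∈ {(1,0), (−1,0), (0,1), (0,−1), (1,1), (−1,−1)}). If σ_n((0,0))^{1/n} → μ as n → ∞ (counting SAWs in ℤ²) and σ'_n((0,0))^{1/n} → μ' as n → ∞ (counting SAWs in 𝕋), then μ < μ'. -/

import Mathlib

open Filter

/-- The number of `n`-step self-avoiding walks in `G` starting at `v`. -/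
noncomputable def sawCount {V : Type*} (G : SimpleGraph V) (v : V) (n : ℕ) : ℕ :=
  Nat.card {p : Σ w : V, G.Walk v w // p.2.IsPath ∧ p.2.length = n}

/-- The square lattice `ℤ²`: vertex set `ℤ × ℤ`, with `(a,b)` and `(c,d)` adjacent iff
`|a − c| + |b − d| = 1`. -/
def squareLattice : SimpleGraph (ℤ × ℤ) :=
  SimpleGraph.fromRel (fun x y => |x.1 - y.1| + |x.2 - y.2| = 1)

/-- The triangular lattice `𝕋`: vertex set `ℤ × ℤ`, with `(a,b)` and `(c,d)` adjacent iff
`(c − a, d − b) ∈ {(1,0), (−1,0), (0,1), (0,−1), (1,1), (−1,−1)}`. -/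
def triLattice : SimpleGraph (ℤ × ℤ) :=
  SimpleGraph.fromRel (fun x y =>
    (y.1 - x.1, y.2 - x.2) ∈
      ({(1, 0), (-1, 0), (0, 1), (0, -1), (1, 1), (-1, -1)} : Set (ℤ × ℤ)))

/-!
The two connective constants are separated by `3 < 7 / 2`. A walk in a graph of maximal degree
`d + 1` has at most `d` continuations after its first step, because it cannot turn back; hence
`μ ≤ 3`. In `𝕋`, consider the walks that never step to the left. Each of their steps is either one
of the two steps to the next column, after which the whole half-plane ahead is fresh, or a vertical
step, after which the direction of vertical steps is fixed until the column is left. Counting these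
two kinds of states gives growth rate `(3 + √17) / 2 > 7 / 2`.
-/

section GrowthRate

variable {a : ℕ → ℝ} {ρ μ : ℝ}

lemma rpow_one_div_natCast_of_pow (hρ : 0 ≤ ρ) {n : ℕ} (hn : n ≠ 0) :
    (ρ ^ n) ^ ((1 : ℝ) / n) = ρ := by
  rw [one_div, Real.pow_rpow_inv_natCast hρ hn]

lemma le_of_tendsto_rpow_one_div_of_pow_le (hρ : 0 ≤ ρ)
    (hμ : Tendsto (fun n : ℕ => a n ^ ((1 : ℝ) / n)) atTop (nhds μ))
    (ha : ∀ᶠ n in atTop, ρ ^ n ≤ a n) : ρ ≤ μ := by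
  refine ge_of_tendsto hμ ?_
  filter_upwards [ha, eventually_ne_atTop 0] with n han hn
  calc ρ = (ρ ^ n) ^ ((1 : ℝ) / n) := (rpow_one_div_natCast_of_pow hρ hn).symm
    _ ≤ a n ^ ((1 : ℝ) / n) := Real.rpow_le_rpow (by positivity) han (by positivity)

lemma le_of_tendsto_rpow_one_div_of_le_mul_pow {C : ℝ} (hC : 0 < C) (hρ : 0 ≤ ρ)
    (hμ : Tendsto (fun n : ℕ => a n ^ ((1 : ℝ) / n)) atTop (nhds μ))
    (ha₀ : ∀ᶠ n in atTop, 0 ≤ a n) (ha : ∀ᶠ n in atTop, a n ≤ C * ρ ^ n) : μ ≤ ρ := by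
  have hroot : Tendsto (fun n : ℕ => C ^ ((1 : ℝ) / n) * ρ) atTop (nhds ρ) := by
    simpa using ((Real.continuousAt_const_rpow hC.ne').tendsto.comp
      tendsto_one_div_atTop_nhds_zero_nat).mul_const ρ
  refine le_of_tendsto_of_tendsto hμ hroot ?_
  filter_upwards [ha₀, ha, eventually_ne_atTop 0] with n han₀ han hn
  calc a n ^ ((1 : ℝ) / n) ≤ (C * ρ ^ n) ^ ((1 : ℝ) / n) :=
        Real.rpow_le_rpow han₀ han (by positivity)
    _ = C ^ ((1 : ℝ) / n) * ρ := by
        rw [Real.mul_rpow hC.le (by positivity), rpow_one_div_natCast_of_pow hρ hn]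

end GrowthRate

section SawIn

variable {V : Type*} (G : SimpleGraph V) (s : Set V) (v : V) (n : ℕ)

/-- The `n`-step self-avoiding walks in `G` from `v` that stay in the region `s`. All vertices are
constrained, including `v`, so there are none when `v ∉ s`. Regions turn the self-avoidance
constraint into a recursion: after its first step the walk stays in `s \ {v}`. -/
def SawIn : Type _ :=
  {p : Σ w : V, G.Walk v w // p.2.IsPath ∧ p.2.length = n ∧ ∀ u ∈ p.2.support, u ∈ s}

/-- The number of `n`-step self-avoiding walks in `G` from `v` that stay in the region `s`. -/
noncomputable def sawCountIn : ℕ :=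
  Nat.card (SawIn G s v n)

lemma sawCountIn_univ : sawCountIn G Set.univ v n = sawCount G v n := by
  simp [sawCountIn, SawIn, sawCount]

variable {G s v}

lemma SawIn.start_mem {n : ℕ} (p : SawIn G s v n) : v ∈ s :=
  p.2.2.2 v p.1.2.start_mem_support

lemma sawCountIn_of_notMem (hv : v ∉ s) : sawCountIn G s v n = 0 :=
  have : IsEmpty (SawIn G s v n) := ⟨fun p => hv p.start_mem⟩
  Nat.card_of_isEmpty

/-- The unique walk of length `0`. -/
def SawIn.nil (hv : v ∈ s) : SawIn G s v 0 :=
  ⟨⟨v, .nil⟩, .nil, rfl, by simpa using hv⟩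

lemma SawIn.eq_nil (hv : v ∈ s) (p : SawIn G s v 0) : p = SawIn.nil hv := by
  obtain ⟨⟨w, p⟩, -, hlen, -⟩ := p
  cases p with
  | nil => rfl
  | cons => simp at hlen

lemma sawCountIn_zero (hv : v ∈ s) : sawCountIn G s v 0 = 1 :=
  Nat.card_eq_one_iff_exists.2 ⟨.nil hv, SawIn.eq_nil hv⟩

/-- Prepends the starting point `v` to a walk from one of its neighbours. -/
def SawIn.cons {n : ℕ} (hv : v ∈ s) (p : Σ w : G.neighborSet v, SawIn G (s \ {v}) w n) :
    SawIn G s v (n + 1) :=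
  ⟨⟨p.2.1.1, .cons p.1.2 p.2.1.2⟩,
    p.2.2.1.cons fun h => (p.2.2.2.2 v h).2 rfl,
    congrArg (· + 1) p.2.2.2.1,
    List.forall_mem_cons.2 ⟨hv, fun u hu => (p.2.2.2.2 u hu).1⟩⟩

lemma SawIn.cons_bijective (hv : v ∈ s) :
    Function.Bijective (SawIn.cons (G := G) (n := n) hv) := by
  constructor
  · rintro ⟨⟨w, hw⟩, ⟨⟨x, p⟩, hp⟩⟩ ⟨⟨w', hw'⟩, ⟨⟨x', p'⟩, hp'⟩⟩ h
    cases congrArg Subtype.val h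
    rfl
  · rintro ⟨⟨x, p⟩, hpath, hlen, hs⟩
    cases p with
    | nil => simp at hlen
    | cons h q =>
      obtain ⟨hq, hvq⟩ := (SimpleGraph.Walk.cons_isPath_iff h q).1 hpath
      have hqs : ∀ u ∈ q.support, u ∈ s \ {v} := fun u hu =>
        ⟨hs u (List.mem_cons_of_mem v hu), fun huv => hvq (huv ▸ hu)⟩
      exact ⟨⟨⟨_, h⟩, ⟨⟨x, q⟩, hq, by simpa using hlen, hqs⟩⟩, rfl⟩

variable [G.LocallyFinite]

instance SawIn.instFinite : Finite (SawIn G s v n) := by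
  induction n generalizing s v with
  | zero =>
    have : Subsingleton (SawIn G s v 0) :=
      ⟨fun p q => (p.eq_nil p.start_mem).trans (q.eq_nil p.start_mem).symm⟩
    infer_instance
  | succ n ih =>
    by_cases hv : v ∈ s
    · exact .of_surjective _ (SawIn.cons_bijective n hv).surjective
    · have : IsEmpty (SawIn G s v (n + 1)) := ⟨fun p => hv p.start_mem⟩
      infer_instance

lemma sawCountIn_succ (hv : v ∈ s) :
    sawCountIn G s v (n + 1) = ∑ w ∈ G.neighborFinset v, sawCountIn G (s \ {v}) w n := by
  rw [sawCountIn, ← Nat.card_eq_of_bijective _ (SawIn.cons_bijective n hv), Nat.card_sigma,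
    SimpleGraph.neighborFinset, ← Finset.sum_set_coe]
  rfl

lemma sawCountIn_mono {t : Set V} (hst : s ⊆ t) : sawCountIn G s v n ≤ sawCountIn G t v n :=
  Nat.card_le_card_of_injective
    (Subtype.map id fun _ hp => ⟨hp.1, hp.2.1, fun u hu => hst (hp.2.2 u hu)⟩)
    (Subtype.map_injective _ Function.injective_id)

lemma sum_sawCountIn_le_succ {ι : Type*} [Fintype ι] {w : ι → V} (hw : Function.Injective w)
    {t : ι → Set V} (hv : v ∈ s) (hadj : ∀ i, G.Adj v (w i)) (ht : ∀ i, t i ⊆ s \ {v}) :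
    ∑ i, sawCountIn G (t i) (w i) n ≤ sawCountIn G s v (n + 1) := by
  calc ∑ i, sawCountIn G (t i) (w i) n
      ≤ ∑ i, sawCountIn G (s \ {v}) (w i) n :=
        Finset.sum_le_sum fun i _ => sawCountIn_mono n (ht i)
    _ = ∑ u ∈ Finset.univ.map ⟨w, hw⟩, sawCountIn G (s \ {v}) u n :=
        (Finset.sum_map Finset.univ ⟨w, hw⟩ fun u => sawCountIn G (s \ {v}) u n).symm
    _ ≤ ∑ u ∈ G.neighborFinset v, sawCountIn G (s \ {v}) u n :=
        Finset.sum_le_sum_of_subset fun u hu => by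
          obtain ⟨i, -, rfl⟩ := Finset.mem_map.1 hu
          exact (G.mem_neighborFinset v _).2 (hadj i)
    _ = sawCountIn G s v (n + 1) := (sawCountIn_succ n hv).symm

end SawIn

section BoundedDegree

variable {V : Type*} {G : SimpleGraph V} [G.LocallyFinite] {d : ℕ}

lemma sawCountIn_le_pow_of_adj_notMem (hd : ∀ v, G.degree v ≤ d + 1) {s : Set V} {u v : V}
    (huv : G.Adj v u) (hu : u ∉ s) (n : ℕ) : sawCountIn G s v n ≤ d ^ n := by
  classical
  induction n generalizing s u v with
  | zero =>
    by_cases hv : v ∈ s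
    · simp [sawCountIn_zero hv]
    · simp [sawCountIn_of_notMem 0 hv]
  | succ n ih =>
    by_cases hv : v ∈ s
    · have huN : u ∈ G.neighborFinset v := (G.mem_neighborFinset v u).2 huv
      have hcard : ((G.neighborFinset v).erase u).card ≤ d := by
        rw [Finset.card_erase_of_mem huN, G.card_neighborFinset_eq_degree]
        exact Nat.sub_le_of_le_add (hd v)
      calc sawCountIn G s v (n + 1)
          = ∑ w ∈ (G.neighborFinset v).erase u, sawCountIn G (s \ {v}) w n := by
            rw [sawCountIn_succ n hv, Finset.sum_erase]
            exact sawCountIn_of_notMem n fun h => hu h.1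
        _ ≤ ((G.neighborFinset v).erase u).card • d ^ n :=
            Finset.sum_le_card_nsmul _ _ _ fun w hw => ih
              ((G.mem_neighborFinset v w).1 (Finset.mem_of_mem_erase hw)).symm fun h => h.2 rfl
        _ ≤ d ^ (n + 1) := by
            rw [smul_eq_mul, pow_succ']
            exact Nat.mul_le_mul_right _ hcard
    · simp [sawCountIn_of_notMem (n + 1) hv]

lemma sawCount_succ_le (hd : ∀ v, G.degree v ≤ d + 1) (v : V) (n : ℕ) :
    sawCount G v (n + 1) ≤ (d + 1) * d ^ n := by
  rw [← sawCountIn_univ, sawCountIn_succ n (Set.mem_univ v)]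
  calc ∑ w ∈ G.neighborFinset v, sawCountIn G (Set.univ \ {v}) w n
      ≤ (G.neighborFinset v).card • d ^ n :=
        Finset.sum_le_card_nsmul _ _ _ fun w hw =>
          sawCountIn_le_pow_of_adj_notMem hd ((G.mem_neighborFinset v w).1 hw).symm
            (fun h => h.2 rfl) n
    _ ≤ (d + 1) * d ^ n := Nat.mul_le_mul_right _ (hd v)

lemma le_of_tendsto_sawCount_rpow (hd₀ : d ≠ 0) (hd : ∀ v, G.degree v ≤ d + 1) {v : V} {μ : ℝ}
    (hμ : Tendsto (fun n : ℕ => (sawCount G v n : ℝ) ^ ((1 : ℝ) / n)) atTop (nhds μ)) :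
    μ ≤ d := by
  refine le_of_tendsto_rpow_one_div_of_le_mul_pow (C := (d + 1 : ℕ)) (by positivity)
    (by positivity) hμ (.of_forall fun n => by positivity) ?_
  filter_upwards [eventually_ne_atTop 0] with n hn
  obtain ⟨m, rfl⟩ := Nat.exists_eq_succ_of_ne_zero hn
  have hle : sawCount G v (m + 1) ≤ (d + 1) * d ^ (m + 1) :=
    (sawCount_succ_le hd v m).trans
      (Nat.mul_le_mul_left _ (Nat.pow_le_pow_right (Nat.pos_of_ne_zero hd₀) m.le_succ))
  exact_mod_cast hle

end BoundedDegree

section SquareLattice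

lemma squareLattice_adj_iff {v w : ℤ × ℤ} : squareLattice.Adj v w ↔
    w ∈ ({(v.1 + 1, v.2), (v.1 - 1, v.2), (v.1, v.2 + 1), (v.1, v.2 - 1)} : Finset (ℤ × ℤ)) := by
  obtain ⟨a, b⟩ := v
  obtain ⟨c, d⟩ := w
  simp only [squareLattice, SimpleGraph.fromRel_adj, ne_eq, Finset.mem_insert,
    Finset.mem_singleton, Prod.mk.injEq]
  grind

instance squareLattice.instLocallyFinite : squareLattice.LocallyFinite := fun _ =>
  Fintype.ofFinset _ fun _ => squareLattice_adj_iff.symm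

lemma degree_squareLattice_le (v : ℤ × ℤ) : squareLattice.degree v ≤ 4 := by
  rw [← SimpleGraph.card_neighborSet_eq_degree]
  exact (Fintype.card_ofFinset _ fun _ => squareLattice_adj_iff.symm).trans_le Finset.card_le_four

end SquareLattice

section TriangularLattice

lemma triLattice_adj_iff {v w : ℤ × ℤ} : triLattice.Adj v w ↔
    w ∈ ({(v.1 + 1, v.2), (v.1 - 1, v.2), (v.1, v.2 + 1), (v.1, v.2 - 1),
      (v.1 + 1, v.2 + 1), (v.1 - 1, v.2 - 1)} : Finset (ℤ × ℤ)) := by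
  obtain ⟨a, b⟩ := v
  obtain ⟨c, d⟩ := w
  simp only [triLattice, SimpleGraph.fromRel_adj, ne_eq, Finset.mem_insert, Set.mem_insert_iff,
    Set.mem_singleton_iff, Finset.mem_singleton, Prod.mk.injEq]
  omega

instance triLattice.instLocallyFinite : triLattice.LocallyFinite := fun _ =>
  Fintype.ofFinset _ fun _ => triLattice_adj_iff.symm

/-- The closed half-plane to the right of `v`: the region of a walk that never steps to the left
and has just entered the column of `v`. -/
def rightHalfPlane (v : ℤ × ℤ) : Set (ℤ × ℤ) :=
  {w | v.1 ≤ w.1}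

/-- The open half-plane to the right of `v` together with the vertices of its column weakly above
`v` (for `ε = 1`) or weakly below `v` (for `ε = -1`): the region of a walk that never steps to the
left and has just reached `v` by a vertical step in direction `ε`. -/
def rightOrAhead (ε : ℤˣ) (v : ℤ × ℤ) : Set (ℤ × ℤ) :=
  {w | v.1 < w.1 ∨ v.1 = w.1 ∧ 0 ≤ (ε : ℤ) * (w.2 - v.2)}

lemma rightHalfPlane_subset_sdiff_rightHalfPlane {v w : ℤ × ℤ} (h : v.1 < w.1) :
    rightHalfPlane w ⊆ rightHalfPlane v \ {v} := by
  rintro u (hu : w.1 ≤ u.1)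
  refine ⟨h.le.trans hu, ?_⟩
  rintro rfl
  omega

lemma rightHalfPlane_subset_sdiff_rightOrAhead {v w : ℤ × ℤ} (ε : ℤˣ) (h : v.1 < w.1) :
    rightHalfPlane w ⊆ rightOrAhead ε v \ {v} := by
  rintro u (hu : w.1 ≤ u.1)
  refine ⟨Or.inl (h.trans_le hu), ?_⟩
  rintro rfl
  omega

lemma rightOrAhead_subset_sdiff_rightOrAhead (ε : ℤˣ) (v : ℤ × ℤ) :
    rightOrAhead ε (v.1, v.2 + ε) ⊆ rightOrAhead ε v \ {v} := by
  rintro ⟨x, y⟩ hu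
  rcases Int.units_eq_one_or ε with rfl | rfl <;>
    simp only [rightOrAhead, Units.val_one, Units.val_neg, Set.mem_ofPred_eq, Set.mem_sdiff,
      Set.mem_singleton_iff, Prod.ext_iff] at hu ⊢ <;>
    omega

lemma rightOrAhead_subset_rightHalfPlane (ε : ℤˣ) (v : ℤ × ℤ) :
    rightOrAhead ε v ⊆ rightHalfPlane v :=
  fun _ hu => hu.elim le_of_lt fun h => h.1.le

lemma le_sawCountIn_rightHalfPlane_succ (v : ℤ × ℤ) (n : ℕ) :
    sawCountIn triLattice (rightHalfPlane (v.1 + 1, v.2)) (v.1 + 1, v.2) n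
      + sawCountIn triLattice (rightHalfPlane (v.1 + 1, v.2 + 1)) (v.1 + 1, v.2 + 1) n
      + sawCountIn triLattice (rightOrAhead 1 (v.1, v.2 + 1)) (v.1, v.2 + 1) n
      + sawCountIn triLattice (rightOrAhead (-1) (v.1, v.2 - 1)) (v.1, v.2 - 1) n
    ≤ sawCountIn triLattice (rightHalfPlane v) v (n + 1) := by
  have hw : Function.Injective
      ![(v.1 + 1, v.2), (v.1 + 1, v.2 + 1), (v.1, v.2 + 1), (v.1, v.2 - 1)] := by
    intro i j
    fin_cases i <;> fin_cases j <;> simp <;> omega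
  have hahead (ε : ℤˣ) : rightOrAhead ε (v.1, v.2 + ε) ⊆ rightHalfPlane v \ {v} :=
    (rightOrAhead_subset_sdiff_rightOrAhead ε v).trans
      (Set.sdiff_subset_sdiff_left (rightOrAhead_subset_rightHalfPlane ε v))
  have ht : ∀ i : Fin 4, ![rightHalfPlane (v.1 + 1, v.2), rightHalfPlane (v.1 + 1, v.2 + 1),
      rightOrAhead 1 (v.1, v.2 + 1), rightOrAhead (-1) (v.1, v.2 - 1)] i
      ⊆ rightHalfPlane v \ {v} := by
    simp only [Fin.forall_fin_succ]
    exact ⟨rightHalfPlane_subset_sdiff_rightHalfPlane (lt_add_one _),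
      rightHalfPlane_subset_sdiff_rightHalfPlane (lt_add_one _), hahead 1, hahead (-1), nofun⟩
  have hadj : ∀ i : Fin 4, triLattice.Adj v
      (![(v.1 + 1, v.2), (v.1 + 1, v.2 + 1), (v.1, v.2 + 1), (v.1, v.2 - 1)] i) := by
    simp [Fin.forall_fin_succ, triLattice_adj_iff]
  simpa [Fin.sum_univ_four] using sum_sawCountIn_le_succ n hw (le_refl v.1) hadj ht

lemma le_sawCountIn_rightOrAhead_succ (ε : ℤˣ) (v : ℤ × ℤ) (n : ℕ) :
    sawCountIn triLattice (rightHalfPlane (v.1 + 1, v.2)) (v.1 + 1, v.2) n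
      + sawCountIn triLattice (rightHalfPlane (v.1 + 1, v.2 + 1)) (v.1 + 1, v.2 + 1) n
      + sawCountIn triLattice (rightOrAhead ε (v.1, v.2 + ε)) (v.1, v.2 + ε) n
    ≤ sawCountIn triLattice (rightOrAhead ε v) v (n + 1) := by
  have hw : Function.Injective
      ![(v.1 + 1, v.2), (v.1 + 1, v.2 + 1), (v.1, v.2 + (ε : ℤ))] := by
    intro i j
    fin_cases i <;> fin_cases j <;> simp
  have ht : ∀ i : Fin 3, ![rightHalfPlane (v.1 + 1, v.2), rightHalfPlane (v.1 + 1, v.2 + 1),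
      rightOrAhead ε (v.1, v.2 + ε)] i ⊆ rightOrAhead ε v \ {v} := by
    simp only [Fin.forall_fin_succ]
    exact ⟨rightHalfPlane_subset_sdiff_rightOrAhead ε (lt_add_one _),
      rightHalfPlane_subset_sdiff_rightOrAhead ε (lt_add_one _),
      rightOrAhead_subset_sdiff_rightOrAhead ε v, nofun⟩
  have hadj : ∀ i : Fin 3, triLattice.Adj v
      (![(v.1 + 1, v.2), (v.1 + 1, v.2 + 1), (v.1, v.2 + (ε : ℤ))] i) := by
    rcases Int.units_eq_one_or ε with rfl | rfl <;>
      simp [Fin.forall_fin_succ, triLattice_adj_iff, sub_eq_add_neg]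
  simpa [Fin.sum_univ_three] using sum_sawCountIn_le_succ n hw (by simp [rightOrAhead]) hadj ht

/-- The pair `(1, c)` is a subsolution with rate `ρ` of the two recursions above when
`c ≤ 1`, `ρ ≤ 2 + 2 * c` and `c * ρ ≤ 2 + c`; here `ρ = 7 / 2` and `c = 3 / 4`. -/
lemma pow_le_sawCountIn_triLattice (n : ℕ) (v : ℤ × ℤ) :
    (7 / 2 : ℝ) ^ n ≤ sawCountIn triLattice (rightHalfPlane v) v n ∧
      ∀ ε : ℤˣ, 3 / 4 * (7 / 2 : ℝ) ^ n ≤ sawCountIn triLattice (rightOrAhead ε v) v n := by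
  induction n generalizing v with
  | zero =>
    rw [sawCountIn_zero (show v ∈ rightHalfPlane v from le_refl v.1)]
    refine ⟨by norm_num, fun ε => ?_⟩
    rw [sawCountIn_zero (by simp [rightOrAhead])]
    norm_num
  | succ n ih =>
    have hright := (ih (v.1 + 1, v.2)).1
    have hdiag := (ih (v.1 + 1, v.2 + 1)).1
    refine ⟨?_, fun ε => ?_⟩
    · have hup := (ih (v.1, v.2 + 1)).2 1
      have hdown := (ih (v.1, v.2 - 1)).2 (-1)
      have hsucc := Nat.cast_le (α := ℝ).2 (le_sawCountIn_rightHalfPlane_succ v n)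
      push_cast at hsucc
      rw [pow_succ]
      linarith
    · have hpos : (0 : ℝ) < (7 / 2) ^ n := by positivity
      have hahead := (ih (v.1, v.2 + ε)).2 ε
      have hsucc := Nat.cast_le (α := ℝ).2 (le_sawCountIn_rightOrAhead_succ ε v n)
      push_cast at hsucc
      rw [pow_succ]
      linarith

lemma pow_le_sawCount_triLattice (v : ℤ × ℤ) (n : ℕ) :
    (7 / 2 : ℝ) ^ n ≤ sawCount triLattice v n := by
  rw [← sawCountIn_univ]
  exact (pow_le_sawCountIn_triLattice n v).1.trans
    (Nat.cast_le.2 (sawCountIn_mono n (Set.subset_univ _)))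

end TriangularLattice

/-- The connective constant of the square lattice is strictly smaller than that of the
triangular lattice. -/
theorem square_lt_triangular (μ μ' : ℝ)
    (hμ : Tendsto (fun n : ℕ => (sawCount squareLattice (0, 0) n : ℝ) ^ ((1 : ℝ) / n))
      atTop (nhds μ))
    (hμ' : Tendsto (fun n : ℕ => (sawCount triLattice (0, 0) n : ℝ) ^ ((1 : ℝ) / n))
      atTop (nhds μ')) :
    μ < μ' := by
  have hsq : μ ≤ 3 :=
    mod_cast le_of_tendsto_sawCount_rpow (d := 3) three_ne_zero degree_squareLattice_le hμ
  have htri : 7 / 2 ≤ μ' := le_of_tendsto_rpow_one_div_of_pow_le (by norm_num) hμ'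
    (.of_forall (pow_le_sawCount_triLattice (0, 0)))
  linarith
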